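/- arXiv:1310.3526 — 2 statements merged into one kernel-verified Lean document; each statement's English description precedes it below -/
import Mathlib

section
/- (Pósa's rotation-extension lemma) Let G = (V,E) be a finite graph and let t ≥ 1 be an integer such that |N(X) \ X| ≥ 2|X| − 1 for every vertex set X ⊆ V with |X| ≤ t. Then for every vertex v ∈ V there exists a path of length 3t − 2 in G having v as an endpoint. -/
/-- `N_G(X)`: the set of vertices adjacent in `G` to at least one vertex of `X`. -/
def setNeighborSet {V : Type*} (G : SimpleGraph V) (X : Set V) : Set V :=
  {u | ∃ v ∈ X, G.Adj v u}

namespace Posa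

variable {V : Type*}

/-- Consecutive on a list, in either order. -/
def Cons (l : List V) (a b : V) : Prop :=
  ∃ i : ℕ, (l[i]? = some a ∧ l[i+1]? = some b) ∨ (l[i]? = some b ∧ l[i+1]? = some a)

/-- Neighbours of a set along a list. -/
def pn (l : List V) (X : Set V) : Set V := {b | ∃ a ∈ X, Cons l a b}

/-- Rotations of a path, written as a list whose head is the moving end. -/
inductive Rot (G : SimpleGraph V) (l : List V) : List V → Prop
  | refl : Rot G l l
  | step (e p : V) (A B : List V) (h : Rot G l (e :: A ++ p :: B)) (hep : G.Adj e p) :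
      Rot G l ((e :: A).reverse ++ p :: B)

/-- Ends of the rotations. -/
def ends (G : SimpleGraph V) (l : List V) : Set V := {x | ∃ m, Rot G l (x :: m)}

/-- A path ending at `v`. -/
def Valid (G : SimpleGraph V) (v : V) (l : List V) : Prop :=
  l.IsChain G.Adj ∧ l.Nodup ∧ l.getLast? = some v

lemma Cons.symm {l : List V} {a b : V} (h : Cons l a b) : Cons l b a := by
  obtain ⟨i, h⟩ := h
  exact ⟨i, h.symm⟩

lemma Cons.adj {G : SimpleGraph V} {l : List V} (hl : l.IsChain G.Adj) {a b : V}
    (h : Cons l a b) : G.Adj a b := by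
  rw [List.isChain_iff_getElem] at hl
  obtain ⟨i, ⟨h1, h2⟩ | ⟨h1, h2⟩⟩ := h
  · obtain ⟨q1, rfl⟩ := List.getElem?_eq_some_iff.1 h1
    obtain ⟨q2, rfl⟩ := List.getElem?_eq_some_iff.1 h2
    exact hl i q2
  · obtain ⟨q1, rfl⟩ := List.getElem?_eq_some_iff.1 h1
    obtain ⟨q2, rfl⟩ := List.getElem?_eq_some_iff.1 h2
    exact (hl i q2).symm

lemma chain_cons (l : List V) : l.IsChain (Cons l) := by
  rw [List.isChain_iff_getElem]
  intro i hi
  exact ⟨i, Or.inl ⟨by simp, by simp⟩⟩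

lemma Cons.tail {e : V} {l : List V} {a b : V} (h : Cons l a b) : Cons (e :: l) a b := by
  obtain ⟨i, h⟩ := h
  exact ⟨i + 1, by simpa using h⟩

lemma Rot.perm {G : SimpleGraph V} {l m : List V} (h : Rot G l m) : m.Perm l := by
  induction h with
  | refl => exact List.Perm.refl _
  | step e p A B h hep ih =>
    exact ((List.reverse_perm _).append_right _).trans ih

lemma Rot.valid {G : SimpleGraph V} {v : V} {l m : List V} (h : Rot G l m) (hl : Valid G v l) :
    Valid G v m := by
  refine ⟨?_, h.perm.nodup_iff.2 hl.2.1, ?_⟩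
  · induction h with
    | refl => exact hl.1
    | step e p A B h hep ih =>
      rw [List.isChain_append] at ih ⊢
      refine ⟨?_, ih.2.1, ?_⟩
      · rw [List.isChain_reverse]
        exact ih.1.imp (fun a b h => h.symm)
      · simp; exact hep
  · induction h with
    | refl => exact hl.2.2
    | step e p A B h hep ih =>
      rw [List.getLast?_append_of_ne_nil _ (by simp)] at ih ⊢
      exact ih

lemma self_mem_ends (G : SimpleGraph V) (e : V) (l : List V) : e ∈ ends G (e :: l) :=
  ⟨l, Rot.refl⟩

/-- Rotation at a neighbour: the vertex before the pivot is an end. -/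
lemma exists_pivot {G : SimpleGraph V} {l m : List V} {x y : V} (h : Rot G l (x :: m))
    (hxy : G.Adj x y) (hy : y ∈ l) {K : V → V → Prop} (hK : (x :: m).IsChain K) :
    ∃ c ∈ ends G l, K c y := by
  have hy' : y ∈ m := by
    have := h.perm.mem_iff.2 hy
    simp only [List.mem_cons] at this
    rcases this with rfl | h'
    · exact (G.irrefl hxy).elim
    · exact h'
  obtain ⟨A, B, rfl⟩ := List.append_of_mem hy'
  have hr := Rot.step x y A B h hxy
  obtain ⟨A', c, hA⟩ : ∃ A' c, x :: A = A' ++ [c] :=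
    ⟨(x :: A).dropLast, (x :: A).getLast (by simp), (List.dropLast_append_getLast _).symm⟩
  refine ⟨c, ⟨A'.reverse ++ y :: B, ?_⟩, ?_⟩
  · rw [hA] at hr
    simpa using hr
  · rw [← List.cons_append, hA, List.isChain_append] at hK
    exact hK.2.2 c (by simp) y (by simp)

lemma rot_chain {G : SimpleGraph V} {l m : List V} (h : Rot G l m) :
    m.IsChain (fun a b => Cons l a b ∨
      (a ∈ ends G l ∪ pn l (ends G l) ∧ b ∈ ends G l ∪ pn l (ends G l))) := by
  induction h with
  | refl => exact (chain_cons l).imp (fun a b h => Or.inl h)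
  | step e p A B h hep ih =>
    have hp : p ∈ l := h.perm.mem_iff.1 (by simp)
    obtain ⟨c, hc, hK⟩ := exists_pivot (G := G) (l := l) h hep hp ih
    have hpT : p ∈ ends G l ∪ pn l (ends G l) := by
      rcases hK with hK | hK
      · exact Or.inr ⟨c, hc, hK⟩
      · exact hK.2
    rw [List.isChain_append] at ih ⊢
    refine ⟨?_, ih.2.1, ?_⟩
    · rw [List.isChain_reverse]
      exact ih.1.imp (fun a b h => h.imp Cons.symm And.symm)
    · simp only [List.getLast?_reverse, List.head?_cons, Option.mem_def, Option.some.injEq]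
      rintro x rfl y rfl
      exact Or.inr ⟨Or.inl ⟨_, h⟩, hpT⟩

lemma posa {G : SimpleGraph V} {l : List V} {x y : V} (hx : x ∈ ends G l)
    (hxy : G.Adj x y) (hy : y ∈ l) : y ∈ ends G l ∪ pn l (ends G l) := by
  obtain ⟨m, hm⟩ := hx
  obtain ⟨c, hc, hK⟩ := exists_pivot hm hxy hy (rot_chain hm)
  rcases hK with hK | hK
  · exact Or.inr ⟨c, hc, hK⟩
  · exact hK.2

lemma ncard_rel [Finite V] (R : V → V → Prop) (hR : ∀ a b c, R a b → R a c → b = c) (X : Set V) :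
    {b | ∃ a ∈ X, R a b}.ncard ≤ X.ncard := by
  classical
  let f : V → V := fun a => if h : ∃ b, R a b then h.choose else a
  refine le_trans (Set.ncard_le_ncard (t := f '' X) ?_ (Set.toFinite _)) (Set.ncard_image_le (Set.toFinite _))
  rintro b ⟨a, ha, hab⟩
  refine ⟨a, ha, ?_⟩
  have h : ∃ b, R a b := ⟨b, hab⟩
  simp only [f, dif_pos h]
  exact hR _ _ _ h.choose_spec hab

lemma idx_inj {l : List V} (hl : l.Nodup) {i j : ℕ} {a : V} (h1 : l[i]? = some a)
    (h2 : l[j]? = some a) : i = j := by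
  obtain ⟨q1, rfl⟩ := List.getElem?_eq_some_iff.1 h1
  exact (List.getElem?_inj q1 hl).1 (h1.trans h2.symm)

lemma ncard_next [Finite V] {l : List V} (hl : l.Nodup) (X : Set V) :
    {b | ∃ a ∈ X, ∃ i : ℕ, l[i]? = some a ∧ l[i+1]? = some b}.ncard ≤ X.ncard := by
  apply ncard_rel
  rintro a b c ⟨i, h1, h2⟩ ⟨j, h3, h4⟩
  obtain rfl := idx_inj hl h1 h3
  exact Option.some.inj (h2.symm.trans h4)

lemma ncard_prev [Finite V] {l : List V} (hl : l.Nodup) (X : Set V) :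
    {b | ∃ a ∈ X, ∃ i : ℕ, l[i]? = some b ∧ l[i+1]? = some a}.ncard ≤ X.ncard := by
  apply ncard_rel
  rintro a b c ⟨i, h1, h2⟩ ⟨j, h3, h4⟩
  have := idx_inj hl h2 h4
  obtain rfl : i = j := by omega
  exact Option.some.inj (h1.symm.trans h3)

lemma pn_eq (l : List V) (X : Set V) :
    pn l X = {b | ∃ a ∈ X, ∃ i : ℕ, l[i]? = some a ∧ l[i+1]? = some b} ∪
      {b | ∃ a ∈ X, ∃ i : ℕ, l[i]? = some b ∧ l[i+1]? = some a} := by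
  ext b
  simp only [pn, Cons, Set.mem_ofPred_eq, Set.mem_union]
  constructor
  · rintro ⟨a, ha, i, h | h⟩
    · exact Or.inl ⟨a, ha, i, h⟩
    · exact Or.inr ⟨a, ha, i, h⟩
  · rintro (⟨a, ha, i, h⟩ | ⟨a, ha, i, h⟩)
    · exact ⟨a, ha, i, Or.inl h⟩
    · exact ⟨a, ha, i, Or.inr h⟩

lemma ncard_pn [Finite V] {l : List V} (hl : l.Nodup) (X : Set V) :
    (pn l X).ncard ≤ 2 * X.ncard := by
  rw [pn_eq]
  have := Set.ncard_union_le {b | ∃ a ∈ X, ∃ i : ℕ, l[i]? = some a ∧ l[i+1]? = some b}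
      {b | ∃ a ∈ X, ∃ i : ℕ, l[i]? = some b ∧ l[i+1]? = some a}
  have := ncard_next hl X
  have := ncard_prev hl X
  omega

lemma ncard_pn_head [Finite V] {e : V} {l : List V} (hl : (e :: l).Nodup) {X : Set V} (he : e ∈ X) :
    (pn (e :: l) X).ncard + 1 ≤ 2 * X.ncard := by
  rw [pn_eq]
  have h0 := Set.ncard_union_le {b | ∃ a ∈ X, ∃ i : ℕ, (e :: l)[i]? = some a ∧ (e :: l)[i+1]? = some b}
      {b | ∃ a ∈ X, ∃ i : ℕ, (e :: l)[i]? = some b ∧ (e :: l)[i+1]? = some a}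
  have h1 := ncard_next hl X
  have h2 := ncard_prev hl (X \ {e})
  have h3 : {b | ∃ a ∈ X, ∃ i : ℕ, (e :: l)[i]? = some b ∧ (e :: l)[i+1]? = some a} =
      {b | ∃ a ∈ X \ {e}, ∃ i : ℕ, (e :: l)[i]? = some b ∧ (e :: l)[i+1]? = some a} := by
    ext b
    constructor
    · rintro ⟨a, ha, i, hb, hi⟩
      refine ⟨a, ⟨ha, ?_⟩, i, hb, hi⟩
      rintro rfl
      have := idx_inj hl hi (j := 0) (by simp)
      omega
    · rintro ⟨a, ha, h⟩
      exact ⟨a, ha.1, h⟩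
  have h4 := Set.ncard_sdiff_singleton_add_one he (Set.toFinite _)
  rw [h3] at h0 ⊢
  omega

lemma submod [Finite V] (G : SimpleGraph V) (S T : Set V) :
    (setNeighborSet G (S ∪ T) \ (S ∪ T)).ncard + (setNeighborSet G (S ∩ T) \ (S ∩ T)).ncard ≤
      (setNeighborSet G S \ S).ncard + (setNeighborSet G T \ T).ncard := by
  rw [← Set.ncard_union_add_ncard_inter _ _ (Set.toFinite _) (Set.toFinite _),
    ← Set.ncard_union_add_ncard_inter (setNeighborSet G S \ S) _ (Set.toFinite _) (Set.toFinite _)]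
  apply add_le_add
  · apply Set.ncard_le_ncard _ (Set.toFinite _)
    rintro u (⟨⟨a, ha | ha, hu⟩, h⟩ | ⟨⟨a, ha, hu⟩, h⟩)
    · exact Or.inl ⟨⟨a, ha, hu⟩, fun h' => h (Or.inl h')⟩
    · exact Or.inr ⟨⟨a, ha, hu⟩, fun h' => h (Or.inr h')⟩
    · by_cases hS : u ∈ S
      · exact Or.inr ⟨⟨a, ha.2, hu⟩, fun h' => h ⟨hS, h'⟩⟩
      · exact Or.inl ⟨⟨a, ha.1, hu⟩, hS⟩
  · apply Set.ncard_le_ncard _ (Set.toFinite _)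
    rintro u ⟨⟨_, h⟩, ⟨⟨a, ha, hu⟩, _⟩⟩
    exact ⟨⟨⟨a, ha.1, hu⟩, fun h' => h (Or.inl h')⟩, ⟨⟨a, ha.2, hu⟩, fun h' => h (Or.inr h')⟩⟩

lemma Valid.extend {G : SimpleGraph V} {v x y : V} {l : List V} (h : Valid G v (x :: l))
    (hxy : G.Adj x y) (hy : y ∉ x :: l) : Valid G v (y :: x :: l) := by
  refine ⟨?_, List.nodup_cons.2 ⟨hy, h.2.1⟩, ?_⟩
  · rw [List.isChain_cons_cons]
    exact ⟨hxy.symm, h.1⟩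
  · simpa [List.getLast?_cons_cons] using h.2.2

lemma ncard_list [Finite V] (l : List V) : {x | x ∈ l}.ncard ≤ l.length := by
  classical
  have : {x | x ∈ l} = (l.toFinset : Set V) := by ext; simp
  rw [this, Set.ncard_coe_finset]
  exact l.toFinset_card_le

/-- Sets whose closed neighbourhood lies in a short list are small. -/
lemma small [Finite V] {G : SimpleGraph V} {t : ℕ} (ht : 1 ≤ t)
    (hexp : ∀ X : Set V, X.ncard ≤ t →
      2 * X.ncard - 1 ≤ ((setNeighborSet G X) \ X).ncard)
    {l : List V} (hl : l.length < 3 * t - 1) {X : Set V} (hX : ∀ x ∈ X, x ∈ l)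
    (hN : ∀ x ∈ X, ∀ y, G.Adj x y → y ∈ l) : X.ncard < t := by
  by_contra hcon
  obtain ⟨Y, hYX, hY⟩ := Set.exists_subset_card_eq (not_lt.1 hcon)
  have h1 := hexp Y hY.le
  have h2 : (Y ∪ (setNeighborSet G Y \ Y)).ncard = _ :=
    Set.ncard_union_eq Set.disjoint_sdiff_right (Set.toFinite _) (Set.toFinite _)
  have h3 : (Y ∪ (setNeighborSet G Y \ Y)).ncard ≤ {x | x ∈ l}.ncard := by
    apply Set.ncard_le_ncard _ (Set.toFinite _)
    rintro x (hx | ⟨⟨a, ha, hx⟩, -⟩)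
    · exact hX x (hYX hx)
    · exact hN a (hYX ha) x hx
  have h4 := ncard_list l
  omega

lemma tight [Finite V] {G : SimpleGraph V} {t : ℕ} (ht : 1 ≤ t)
    (hexp : ∀ X : Set V, X.ncard ≤ t →
      2 * X.ncard - 1 ≤ ((setNeighborSet G X) \ X).ncard) {v : V}
    {e : V} {l : List V} (hl : (e :: l).length < 3 * t - 1) (hv : Valid G v (e :: l))
    (hmax : ∀ m, Valid G v m → m.length ≤ (e :: l).length) :
    (∀ x ∈ ends G (e :: l), x ∈ e :: l) ∧
    (∀ x ∈ ends G (e :: l), ∀ y, G.Adj x y → y ∈ e :: l) ∧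
    (setNeighborSet G (ends G (e :: l)) \ ends G (e :: l) ⊆ pn (e :: l) (ends G (e :: l))) ∧
    ((setNeighborSet G (ends G (e :: l)) \ ends G (e :: l)).ncard + 1 ≤
      2 * (ends G (e :: l)).ncard) ∧
    (∀ Z ⊆ ends G (e :: l), e ∉ Z → 2 * Z.ncard ≤ (setNeighborSet G Z \ Z).ncard) ∧
    (∀ a ∈ ends G (e :: l), ¬ G.Adj e a) := by
  set P := e :: l with hP
  set S := ends G P with hS
  have heS : e ∈ S := self_mem_ends G e l
  have c1 : ∀ x ∈ S, x ∈ P := by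
    rintro x ⟨m, hm⟩
    exact hm.perm.mem_iff.1 (by simp)
  have c2 : ∀ x ∈ S, ∀ y, G.Adj x y → y ∈ P := by
    rintro x ⟨m, hm⟩ y hxy
    by_contra hy
    have := hmax _ ((hm.valid hv).extend hxy (fun h => hy (hm.perm.mem_iff.1 h)))
    have h2 := hm.perm.length_eq
    simp only [List.length_cons] at this h2
    omega
  have c3 : setNeighborSet G S \ S ⊆ pn P S := by
    rintro y ⟨⟨x, hx, hxy⟩, hy⟩
    exact (posa hx hxy (c2 x hx y hxy)).resolve_left hy
  have c4 : (setNeighborSet G S \ S).ncard + 1 ≤ 2 * S.ncard := by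
    have h1 := Set.ncard_le_ncard c3 (Set.toFinite _)
    have h2 := ncard_pn_head hv.2.1 heS
    rw [← hP] at h2
    omega
  have c0 : S.ncard < t := small ht hexp hl c1 c2
  have key : ∀ Z ⊆ S, e ∉ Z → 2 * Z.ncard ≤ (pn P Z \ S).ncard := by
    intro Z hZ he
    have h1 : setNeighborSet G S \ S ⊆ (pn P Z \ S) ∪ pn P (S \ Z) := by
      intro y hy
      obtain ⟨a, ha, hay⟩ := c3 hy
      by_cases haZ : a ∈ Z
      · exact Or.inl ⟨⟨a, haZ, hay⟩, hy.2⟩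
      · exact Or.inr ⟨a, ⟨ha, haZ⟩, hay⟩
    have h2 := Set.ncard_le_ncard h1 (Set.toFinite _)
    have h3 := Set.ncard_union_le (pn P Z \ S) (pn P (S \ Z))
    have h4 := ncard_pn_head hv.2.1 (X := S \ Z) ⟨heS, he⟩
    have h5 := Set.ncard_sdiff_add_ncard_of_subset hZ (Set.toFinite _)
    have h6 := hexp S c0.le
    rw [← hP] at h4
    omega
  refine ⟨c1, c2, c3, c4, ?_, ?_⟩
  · intro Z hZ he
    refine (key Z hZ he).trans (Set.ncard_le_ncard ?_ (Set.toFinite _))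
    rintro y ⟨⟨a, ha, hay⟩, hy⟩
    exact ⟨⟨a, ha, hay.adj hv.1⟩, fun h => hy (hZ h)⟩
  · intro a ha hea
    obtain ⟨c, hc, hca⟩ := exists_pivot (G := G) (l := P) Rot.refl hea (c1 a ha) (chain_cons P)
    have h1 := key {a} (by simpa using ha) (by simpa using hea.ne)
    have h2 := ncard_pn hv.2.1 {a}
    have h3 : (pn P {a} \ S).ncard < (pn P {a}).ncard := by
      apply Set.ncard_lt_ncard _ (Set.toFinite _)
      refine ⟨Set.sdiff_subset, fun h => (h (show c ∈ pn P {a} from ⟨a, rfl, hca.symm⟩)).2 hc⟩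
    simp only [Set.ncard_singleton] at h1 h2
    omega

lemma exists_long [Finite V] {G : SimpleGraph V} {t : ℕ} (ht : 1 ≤ t)
    (hexp : ∀ X : Set V, X.ncard ≤ t →
      2 * X.ncard - 1 ≤ ((setNeighborSet G X) \ X).ncard) (v : V) :
    ∃ l, Valid G v l ∧ 3 * t - 1 ≤ l.length := by
  by_contra! hcon
  obtain ⟨P, hPv, hmax⟩ : ∃ P, Valid G v P ∧ ∀ m, Valid G v m → m.length ≤ P.length := by
    have hne : ({n | ∃ l, Valid G v l ∧ l.length = n} : Set ℕ).Nonempty :=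
      ⟨1, [v], ⟨by simp, by simp, by simp⟩, by simp⟩
    have hb : BddAbove ({n | ∃ l, Valid G v l ∧ l.length = n} : Set ℕ) := by
      refine ⟨3 * t - 1, ?_⟩
      rintro n ⟨l, hl, rfl⟩
      exact (hcon l hl).le
    obtain ⟨P, hP, hlen⟩ := Nat.sSup_mem hne hb
    refine ⟨P, hP, fun m hm => ?_⟩
    rw [hlen]
    exact le_csSup hb ⟨m, hm, rfl⟩
  have hlen := hcon P hPv
  match P, hPv with
  | [], hPv => simp [Valid] at hPv
  | [e], hPv =>
    have h1 := hexp {e} (by simpa using ht)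
    have h2 : (setNeighborSet G {e} \ {e}).Nonempty := by
      apply Set.nonempty_of_ncard_ne_zero
      simp only [Set.ncard_singleton] at h1
      omega
    obtain ⟨y, ⟨a, rfl, hy⟩, hya⟩ := h2
    have := hmax _ (hPv.extend hy (by simpa using hya))
    simp at this
  | e :: w :: l, hPv =>
    obtain ⟨c1, c2, c3, c4, c5, c6⟩ := tight ht hexp hlen hPv hmax
    set S := ends G (e :: w :: l) with hS
    set B := ends G (w :: l) with hB
    have heS : e ∈ S := self_mem_ends G e _
    have hwB : w ∈ B := self_mem_ends G w _
    have hvalid' : Valid G v (w :: l) := by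
      refine ⟨hPv.1.tail, hPv.2.1.of_cons, ?_⟩
      simpa [List.getLast?_cons_cons] using hPv.2.2
    have hBP : ∀ x ∈ B, x ∈ w :: l := by
      rintro x ⟨m, hm⟩
      exact hm.perm.mem_iff.1 (by simp)
    by_cases hA : ∀ x ∈ B, ∀ y, G.Adj x y → y ∈ e :: w :: l
    · have h1 : (S ∪ B).ncard < t := by
        refine small ht hexp hlen ?_ ?_
        · rintro x (hx | hx)
          · exact c1 x hx
          · exact List.mem_cons_of_mem _ (hBP x hx)
        · rintro x (hx | hx)
          · exact c2 x hx
          · exact hA x hx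
      have h2 := hexp _ h1.le
      have h3 := ncard_pn_head hPv.2.1 (X := S ∪ B) (Or.inl heS)
      have hw : w ∈ pn (e :: w :: l) (S ∪ B) := ⟨e, Or.inl heS, 0, Or.inl ⟨by simp, by simp⟩⟩
      have h4 : setNeighborSet G (S ∪ B) \ (S ∪ B) ⊆ pn (e :: w :: l) (S ∪ B) \ {w} := by
        rintro y ⟨⟨x, hx, hxy⟩, hy⟩
        refine ⟨?_, ?_⟩
        · rcases hx with hx | hx
          · obtain ⟨a, ha, h⟩ := c3 ⟨⟨x, hx, hxy⟩, fun h => hy (Or.inl h)⟩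
            exact ⟨a, Or.inl ha, h⟩
          · have hyP := hA x hx y hxy
            rcases List.mem_cons.1 hyP with rfl | hyP
            · exact (hy (Or.inl heS)).elim
            · rcases posa hx hxy hyP with h | ⟨a, ha, h⟩
              · exact (hy (Or.inr h)).elim
              · exact ⟨a, Or.inr ha, h.tail⟩
        · rintro rfl
          exact hy (Or.inr hwB)
      have h5 := Set.ncard_le_ncard h4 (Set.toFinite _)
      have h6 := Set.ncard_sdiff_singleton_add_one hw (Set.toFinite _)
      omega
    · push Not at hA
      obtain ⟨b, ⟨m, hm⟩, y, hby, hy⟩ := hA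
      have hmP : ∀ x, x ∈ b :: m ↔ x ∈ w :: l := fun x => hm.perm.mem_iff
      have hyw : y ∉ w :: l := fun h => hy (List.mem_cons_of_mem _ h)
      have hye : y ≠ e := by rintro rfl; simp at hy
      have hew : e ∉ w :: l := (List.nodup_cons.1 hPv.2.1).1
      have hQv : Valid G v (y :: b :: m) :=
        (hm.valid hvalid').extend hby (fun h => hyw ((hmP y).1 h))
      have hQlen : (y :: b :: m).length = (e :: w :: l).length := by
        have := hm.perm.length_eq
        simpa using this
      obtain ⟨d1, d2, d3, d4, d5, d6⟩ := tight ht hexp (hQlen ▸ hlen) hQv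
        (fun m' hm' => hQlen ▸ hmax m' hm')
      set T := ends G (y :: b :: m) with hT
      have hyT : y ∈ T := self_mem_ends G y _
      have hQmem : ∀ x, x ∈ y :: b :: m ↔ x = y ∨ x ∈ w :: l := by
        intro x
        rw [List.mem_cons, hmP]
      have heT : e ∉ T := by
        intro h
        rcases (hQmem e).1 (d1 e h) with h | h
        · exact hye h.symm
        · exact hew h
      have hyS : y ∉ S := fun h => hy (c1 y h)
      have hsmall : (S ∪ T \ {y}).ncard < t := by
        refine small ht hexp hlen ?_ ?_
        · rintro x (hx | ⟨hx, hxy⟩)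
          · exact c1 x hx
          · exact List.mem_cons_of_mem _ (((hQmem x).1 (d1 x hx)).resolve_left hxy)
        · rintro x (hx | ⟨hx, hxy⟩) z hz
          · exact c2 x hx z hz
          · rcases (hQmem z).1 (d2 x hx z hz) with rfl | h
            · exact (d6 x hx hz.symm).elim
            · exact List.mem_cons_of_mem _ h
      have hU : (S ∪ T).ncard ≤ t := by
        have h1 : S ∪ T ⊆ insert y (S ∪ T \ {y}) := by
          rintro x (hx | hx)
          · exact Or.inr (Or.inl hx)
          · by_cases h : x = y
            · exact Or.inl h
            · exact Or.inr (Or.inr ⟨hx, h⟩)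
        have h2 := Set.ncard_le_ncard h1 (Set.toFinite _)
        have h3 := Set.ncard_insert_le y (S ∪ T \ {y})
        omega
      have h1 := hexp _ hU
      have h2 := c5 (S ∩ T) Set.inter_subset_left (fun h => heT h.2)
      have h3 := submod G S T
      have h4 := Set.ncard_union_add_ncard_inter S T (Set.toFinite _) (Set.toFinite _)
      omega

lemma to_walk {G : SimpleGraph V} {v : V} (l : List V) : ∀ x, (x :: l).IsChain G.Adj →
    (x :: l).getLast? = some v → ∃ w : G.Walk x v, w.support = x :: l := by
  induction l with
  | nil =>
    intro x _ h
    simp at h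
    subst h
    exact ⟨SimpleGraph.Walk.nil, by simp⟩
  | cons y l ih =>
    intro x hc h
    rw [List.isChain_cons_cons] at hc
    obtain ⟨w, hw⟩ := ih y hc.2 (by simpa [List.getLast?_cons_cons] using h)
    exact ⟨SimpleGraph.Walk.cons hc.1 w, by simp [hw]⟩

end Posa

/-- Pósa's rotation-extension lemma: if `|N(X) \ X| ≥ 2|X| - 1` for every vertex set `X`
with `|X| ≤ t`, then every vertex is an endpoint of a path of length `3t - 2`. -/
theorem posa_rotation_extension {V : Type*} [Fintype V] (G : SimpleGraph V)
    (t : ℕ) (ht : 1 ≤ t)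
    (hexp : ∀ X : Set V, X.ncard ≤ t →
      2 * X.ncard - 1 ≤ ((setNeighborSet G X) \ X).ncard) :
    ∀ v : V, ∃ (u : V) (w : G.Walk v u), w.IsPath ∧ w.length = 3 * t - 2 := by
  intro v
  obtain ⟨l, hl, hlen⟩ := Posa.exists_long ht hexp v
  match l, hl with
  | [], hl => simp at hlen; omega
  | x :: l, hl =>
    obtain ⟨w, hw⟩ := Posa.to_walk l x hl.1 hl.2.2
    have hp : w.IsPath := by
      rw [SimpleGraph.Walk.isPath_def, hw]
      exact hl.2.1
    have hwl : w.length + 1 = (x :: l).length := by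
      rw [← hw, SimpleGraph.Walk.length_support]
    refine ⟨_, w.reverse.take (3 * t - 2), hp.reverse.take _, ?_⟩
    rw [SimpleGraph.Walk.take_length, SimpleGraph.Walk.length_reverse]
    omega
end

section
/- Let ε ∈ (0,1), n a positive integer, p ∈ (0,1], and let G' be a bipartite graph with parts V₀, V₁ of size n each, maximum degree at most (1+ε)·n·p, and more than (1+ε)·n²·p/2 edges. For i = 0,1, let B_i be the set of vertices in V_i whose degree in G' is at least (1+ε/2)·n·p/2. Then there exists a vertex v₀ ∈ V₀ ∪ V₁ with |N_{G'}(v₀) ∩ (B₀ ∪ B₁)| ≥ ε·n·p/4. -/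
open Finset

/-- If a bipartite graph `G'` with parts of size `n`, maximum degree at most `(1+ε)np`
and more than `(1+ε)n²p/2` edges is given, then some vertex `v₀` has at least `εnp/4`
neighbors among the vertices of degree at least `(1+ε/2)np/2` (i.e. in `B₀ ∪ B₁`). -/
theorem exists_vertex_many_large_degree_neighbors
    (ε : ℝ) (hε : ε ∈ Set.Ioo (0 : ℝ) 1) (n : ℕ) (hn : 0 < n)
    (p : ℝ) (hp0 : 0 < p) (hp1 : p ≤ 1)
    (G' : SimpleGraph (Fin n ⊕ Fin n)) [DecidableRel G'.Adj]
    (hbip : G' ≤ completeBipartiteGraph (Fin n) (Fin n))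
    (hmax : ∀ v : Fin n ⊕ Fin n, (G'.degree v : ℝ) ≤ (1 + ε) * n * p)
    (he : (1 + ε) * n ^ 2 * p / 2 < (G'.edgeFinset.card : ℝ)) :
    ∃ v₀ : Fin n ⊕ Fin n,
      ε * n * p / 4 ≤
        ((G'.neighborFinset v₀ ∩ univ.filter (fun v : Fin n ⊕ Fin n =>
          (1 + ε / 2) * n * p / 2 ≤ (G'.degree v : ℝ))).card : ℝ) := by
  classical
  obtain ⟨hε0, hε1⟩ := hε
  by_contra! hcon
  set P : Fin n ⊕ Fin n → Prop := fun v => (1 + ε / 2) * n * p / 2 ≤ (G'.degree v : ℝ) with hP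
  have hcard : ∀ v, ((G'.neighborFinset v ∩ univ.filter P).card : ℝ)
      = ∑ u, if G'.Adj v u ∧ P u then (1 : ℝ) else 0 := by
    intro v
    rw [Finset.sum_boole]
    congr 2
    ext u
    simp
  have hdeg : ∀ u, (if P u then (G'.degree u : ℝ) else 0)
      = ∑ v, if G'.Adj v u ∧ P u then (1 : ℝ) else 0 := by
    intro u
    by_cases hu : P u
    · simp only [hu, and_true, if_true]
      rw [Finset.sum_boole, ← SimpleGraph.card_neighborFinset_eq_degree]
      congr 2
      ext v
      simp [SimpleGraph.adj_comm]
    · simp [hu]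
  have hswap : ∑ v, ((G'.neighborFinset v ∩ univ.filter P).card : ℝ)
      = ∑ u, (if P u then (G'.degree u : ℝ) else 0) := by
    simp_rw [hcard, hdeg]
    exact Finset.sum_comm
  have h1 : ∑ v, ((G'.neighborFinset v ∩ univ.filter P).card : ℝ)
      ≤ ∑ _v : Fin n ⊕ Fin n, ε * n * p / 4 :=
    Finset.sum_le_sum fun v _ => (hcon v).le
  have h2 : ∑ u, (G'.degree u : ℝ)
      ≤ ∑ u, ((1 + ε / 2) * n * p / 2 + (if P u then (G'.degree u : ℝ) else 0)) := by
    refine Finset.sum_le_sum fun u _ => ?_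
    by_cases hu : P u
    · simp only [hu, if_true]
      have : 0 ≤ (1 + ε / 2) * n * p / 2 := by positivity
      linarith
    · simp only [hu, if_false, add_zero]
      exact (not_le.mp hu).le
  have h3 : ∑ u, (G'.degree u : ℝ) = 2 * (G'.edgeFinset.card : ℝ) := by
    exact_mod_cast G'.sum_degrees_eq_twice_card_edges
  rw [Finset.sum_add_distrib, ← hswap, h3] at h2
  simp only [Finset.sum_const, Finset.card_univ, Fintype.card_sum, Fintype.card_fin,
    nsmul_eq_mul, Nat.cast_add] at h1 h2
  nlinarith
end
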